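/- Every residually amenable group is sofic. That is, if G is a group such that for every g ∈ G with g ≠ 1 there exists a group M satisfying the Følner condition and a group homomorphism φ : G → M with φ(g) ≠ 1, then G is sofic. -/

import Mathlib

/-- Two self-maps of a finite set `A` are `ε`-similar if the number of points where they
differ is at most `ε·|A|`. They are `(1-ε)`-different if they are not `(1-ε)`-similar. -/
def EpsSimilar {A : Type*} [Fintype A] (ε : ℝ) (e f : A → A) : Prop :=
  (Nat.card {a : A // e a ≠ f a} : ℝ) ≤ ε * Fintype.card A

/-- An `(F, ε)`-quasi-action of a group `G` on a finite set `A`: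
(a) `φ(ef)` is `ε`-similar to `φ(e)` followed by `φ(f)` for `e, f ∈ F`;
(b) `φ(1)` is `ε`-similar to the identity;
(c) for `1 ≠ e ∈ F`, `φ(e)` is `(1-ε)`-different from the identity. -/
def IsQuasiAction {G : Type*} [Group G] (F : Finset G) (ε : ℝ)
    {A : Type*} [Fintype A] (φ : G → A → A) : Prop :=
  (∀ e ∈ F, ∀ f ∈ F, EpsSimilar ε (φ (e * f)) (fun a => φ f (φ e a))) ∧
  EpsSimilar ε (φ 1) id ∧
  (∀ e ∈ F, e ≠ 1 → ¬ EpsSimilar (1 - ε) (φ e) id)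

/-- A group `G` is sofic if for every finite subset `F ⊆ G` and every `ε ∈ (0,1)` there is an
`(F, ε)`-quasi-action of `G` on some finite nonempty set. -/
def IsSofic (G : Type*) [Group G] : Prop :=
  ∀ (F : Finset G) (ε : ℝ), 0 < ε → ε < 1 →
    ∃ (A : Type) (_ : Fintype A) (_ : Nonempty A) (φ : G → A → A),
      IsQuasiAction F ε φ

/-- A group `M` satisfies the Følner condition (is amenable as a discrete group) if for every
finite `F ⊆ M` and every `ε > 0` there is a nonempty finite `A ⊆ M` with
`|A·g \ A| ≤ ε·|A|` for all `g ∈ F`. -/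
def FolnerCondition (M : Type*) [Group M] : Prop :=
  ∀ (F : Finset M) (ε : ℝ), 0 < ε →
    ∃ A : Finset M, A.Nonempty ∧
      ∀ g ∈ F, ((((fun a => a * g) '' (A : Set M)) \ (A : Set M)).ncard : ℝ) ≤ ε * A.card

/-- A group is residually amenable if every nontrivial element survives in a homomorphism
to some group satisfying the Følner condition. -/
def ResiduallyAmenable (G : Type*) [Group G] : Prop :=
  ∀ g : G, g ≠ 1 → ∃ (M : Type) (_ : Group M), FolnerCondition M ∧ ∃ φ : G →* M, φ g ≠ 1

/-!
Finite products of groups with the Følner condition again satisfy it, so for a residually amenable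
group `G` and a finite `F ⊆ G` a single homomorphism `φ` to such a group `M` is nontrivial at every
nontrivial element of `F`.
If `A ⊆ M` is a Følner set for the images of `F ∪ F * F`, then right translation by `φ g` keeps all
but few points of `A` inside `A`. Letting the remaining points stay fixed gives a self-map of `A`
for every `g`, and these maps form a quasi-action: away from the few exiting points they compose
like translations, and translation by `φ g ≠ 1` has no fixed point.
-/

open Finset
open scoped Pointwise

section EpsSimilar

variable {A : Type*} [Fintype A] {ε : ℝ} {e f : A → A} {S : Finset A}

theorem epsSimilar_of_forall_notMem (h : ∀ a ∉ S, e a = f a)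
    (hS : (#S : ℝ) ≤ ε * Fintype.card A) : EpsSimilar ε e f := by
  classical
  have hsub : ({a | e a ≠ f a} : Finset A) ⊆ S := fun a ha ↦
    by_contra fun haS ↦ (mem_filter_univ a).1 ha (h a haS)
  rw [EpsSimilar, Nat.card_eq_fintype_card, Fintype.card_subtype]
  exact (Nat.cast_le.2 (card_le_card hsub)).trans hS

theorem not_epsSimilar_of_forall_notMem (h : ∀ a ∉ S, e a ≠ f a)
    (hS : (#S : ℝ) < (1 - ε) * Fintype.card A) : ¬ EpsSimilar ε e f := by
  classical
  have hsub : Sᶜ ⊆ ({a | e a ≠ f a} : Finset A) := fun a ha ↦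
    (mem_filter_univ a).2 (h a (mem_compl.1 ha))
  have hcard : (Fintype.card A : ℝ) ≤ #S + #{a | e a ≠ f a} := by
    exact_mod_cast (card_add_card_compl S).symm.trans_le
      (Nat.add_le_add_left (card_le_card hsub) _)
  rw [EpsSimilar, Nat.card_eq_fintype_card, Fintype.card_subtype]
  linarith

end EpsSimilar

section ExitSet

variable {M N : Type*} [Group M] [Group N] [DecidableEq M] [DecidableEq N]

/-- The points of `A` that right translation by `g` moves out of `A`. It is taken on the side of the
source, so that `A * g \ A` is its translate by `g`. -/
def exitSet (A : Finset M) (g : M) : Finset M := {a ∈ A | a * g ∉ A}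

theorem mem_exitSet {A : Finset M} {g a : M} : a ∈ exitSet A g ↔ a ∈ A ∧ a * g ∉ A :=
  mem_filter

theorem ncard_image_mul_right_sdiff (A : Finset M) (g : M) :
    ((fun a ↦ a * g) '' (A : Set M) \ A).ncard = #(exitSet A g) := by
  have himage : (fun a ↦ a * g) '' (A : Set M) \ A = (fun a ↦ a * g) '' (exitSet A g : Set M) := by
    ext x
    simp only [Set.mem_sdiff, Set.mem_image, mem_coe, mem_exitSet]
    grind
  rw [himage, Set.ncard_image_of_injective _ (mul_left_injective g), Set.ncard_coe_finset]

theorem folnerCondition_iff_card_exitSet_le :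
    FolnerCondition M ↔ ∀ (F : Finset M) (ε : ℝ), 0 < ε →
      ∃ A : Finset M, A.Nonempty ∧ ∀ g ∈ F, (#(exitSet A g) : ℝ) ≤ ε * #A := by
  simp only [FolnerCondition, ncard_image_mul_right_sdiff]

theorem exitSet_product_subset (A : Finset M) (B : Finset N) (g : M × N) :
    exitSet (A ×ˢ B) g ⊆ exitSet A g.1 ×ˢ B ∪ A ×ˢ exitSet B g.2 := by
  intro x
  simp only [mem_exitSet, mem_union, mem_product, Prod.fst_mul, Prod.snd_mul]
  tauto

theorem card_exitSet_product_le (A : Finset M) (B : Finset N) (g : M × N) :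
    #(exitSet (A ×ˢ B) g) ≤ #(exitSet A g.1) * #B + #A * #(exitSet B g.2) := by
  simpa only [card_product] using
    (card_le_card (exitSet_product_subset A B g)).trans (card_union_le _ _)

end ExitSet

namespace FolnerCondition

theorem of_finite (M : Type*) [Group M] [Finite M] : FolnerCondition M := by
  intro F ε hε
  have := Fintype.ofFinite M
  refine ⟨univ, univ_nonempty, fun g _ ↦ ?_⟩
  rw [coe_univ, Set.sdiff_univ, Set.ncard_empty, Nat.cast_zero]
  positivity

theorem prod {M N : Type*} [Group M] [Group N] (hM : FolnerCondition M) (hN : FolnerCondition N) :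
    FolnerCondition (M × N) := by
  classical
  rw [folnerCondition_iff_card_exitSet_le] at hM hN ⊢
  intro F ε hε
  obtain ⟨A, hA, hAF⟩ := hM (F.image Prod.fst) (ε / 2) (half_pos hε)
  obtain ⟨B, hB, hBF⟩ := hN (F.image Prod.snd) (ε / 2) (half_pos hε)
  refine ⟨A ×ˢ B, hA.product hB, fun g hg ↦ ?_⟩
  calc (#(exitSet (A ×ˢ B) g) : ℝ)
      ≤ #(exitSet A g.1) * #B + #A * #(exitSet B g.2) := by
        exact_mod_cast card_exitSet_product_le A B g
    _ ≤ ε / 2 * #A * #B + #A * (ε / 2 * #B) := by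
        gcongr
        · exact hAF _ (mem_image_of_mem _ hg)
        · exact hBF _ (mem_image_of_mem _ hg)
    _ = ε * #(A ×ˢ B) := by
        rw [card_product, Nat.cast_mul]
        ring

end FolnerCondition

theorem ResiduallyAmenable.exists_hom_forall_ne_one {G : Type*} [Group G]
    (hG : ResiduallyAmenable G) (F : Finset G) :
    ∃ (M : Type) (_ : Group M), FolnerCondition M ∧ ∃ φ : G →* M, ∀ g ∈ F, g ≠ 1 → φ g ≠ 1 := by
  classical
  induction F using Finset.induction_on with
  | empty => exact ⟨Unit, inferInstance, .of_finite Unit, 1, by simp⟩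
  | insert g F _ ih =>
    obtain ⟨M, _, hM, φ, hφ⟩ := ih
    by_cases hg : g = 1
    · exact ⟨M, _, hM, φ, (forall_mem_insert ..).2 ⟨fun h ↦ absurd hg h, hφ⟩⟩
    · obtain ⟨N, _, hN, ψ, hψ⟩ := hG g hg
      refine ⟨M × N, inferInstance, hM.prod hN, φ.prod ψ, (forall_mem_insert ..).2 ⟨?_, ?_⟩⟩
      · exact fun _ h ↦ hψ (congrArg Prod.snd h)
      · exact fun k hk hk1 h ↦ hφ k hk hk1 (congrArg Prod.fst h)

section PartialTranslate

variable {M : Type*} [Group M] [DecidableEq M] {A : Finset M} {g h : M}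

/-- Right translation by `g` cut down to a self-map of `A`: points that would leave `A` stay
fixed. -/
def partialTranslate (A : Finset M) (g : M) (a : A) : A :=
  if hg : (a : M) * g ∈ A then ⟨a * g, hg⟩ else a

theorem coe_partialTranslate_of_mem {a : A} (ha : (a : M) * g ∈ A) :
    (partialTranslate A g a : M) = a * g := by
  rw [partialTranslate, dif_pos ha]

theorem partialTranslate_one : partialTranslate A 1 = id := by
  funext a
  simp [partialTranslate]

theorem partialTranslate_mul_apply {a : A} (hg : (a : M) * g ∈ A) (hgh : (a : M) * (g * h) ∈ A) :
    partialTranslate A (g * h) a = partialTranslate A h (partialTranslate A g a) := by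
  have hcoe := coe_partialTranslate_of_mem hg
  apply Subtype.ext
  rw [coe_partialTranslate_of_mem hgh, coe_partialTranslate_of_mem, hcoe, mul_assoc]
  rwa [hcoe, mul_assoc]

theorem partialTranslate_ne_self (hg : g ≠ 1) {a : A} (ha : (a : M) * g ∈ A) :
    partialTranslate A g a ≠ a := fun h ↦
  hg (mul_eq_left.1 ((coe_partialTranslate_of_mem ha).symm.trans (congrArg Subtype.val h)))

theorem epsSimilar_partialTranslate_mul {ε : ℝ}
    (hcard : (#(exitSet A g) + #(exitSet A (g * h)) : ℝ) ≤ ε * #A) :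
    EpsSimilar ε (partialTranslate A (g * h))
      (fun a ↦ partialTranslate A h (partialTranslate A g a)) := by
  refine epsSimilar_of_forall_notMem (S := (exitSet A g ∪ exitSet A (g * h)).subtype (· ∈ A))
    (fun a ha ↦ ?_) ?_
  · simp only [mem_subtype, mem_union, mem_exitSet, a.2, true_and, not_or, not_not] at ha
    exact partialTranslate_mul_apply ha.1 ha.2
  · rw [Fintype.card_coe]
    refine le_trans ?_ hcard
    rw [card_subtype]
    exact_mod_cast (card_filter_le _ _).trans (card_union_le _ _)

theorem not_epsSimilar_partialTranslate_id {ε : ℝ} (hg : g ≠ 1)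
    (hcard : (#(exitSet A g) : ℝ) < (1 - ε) * #A) : ¬ EpsSimilar ε (partialTranslate A g) id := by
  refine not_epsSimilar_of_forall_notMem (S := (exitSet A g).subtype (· ∈ A)) (fun a ha ↦ ?_) ?_
  · simp only [mem_subtype, mem_exitSet, a.2, true_and, not_not] at ha
    exact partialTranslate_ne_self hg ha
  · rw [Fintype.card_coe]
    refine lt_of_le_of_lt ?_ hcard
    rw [card_subtype]
    exact_mod_cast card_filter_le _ _

theorem isQuasiAction_partialTranslate {G : Type*} [Group G] [DecidableEq G] {F : Finset G} {ε : ℝ}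
    (hε : 0 < ε) (φ : G →* M) (hφ : ∀ g ∈ F, g ≠ 1 → φ g ≠ 1) (hA : A.Nonempty)
    (hAF : ∀ g ∈ F ∪ F * F, (#(exitSet A (φ g)) : ℝ) ≤ ε / 2 * #A) :
    IsQuasiAction F ε (fun g ↦ partialTranslate A (φ g)) := by
  refine ⟨fun e he f hf ↦ ?_, ?_, fun e he he1 ↦ ?_⟩
  · have hexit := hAF e (mem_union_left _ he)
    have hexit_mul := hAF (e * f) (mem_union_right _ (mul_mem_mul he hf))
    simp only [map_mul] at hexit_mul ⊢
    exact epsSimilar_partialTranslate_mul (by linarith)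
  · simp only [map_one, partialTranslate_one]
    exact epsSimilar_of_forall_notMem (S := ∅) (fun _ _ ↦ rfl) (by simpa using by positivity)
  · have hexit := hAF e (mem_union_left _ he)
    have hpos : 0 < ε / 2 * #A := mul_pos (half_pos hε) (Nat.cast_pos.2 hA.card_pos)
    exact not_epsSimilar_partialTranslate_id (hφ e he he1) (by linarith)

end PartialTranslate

/-- Every residually amenable group is sofic. -/
theorem isSofic_of_residuallyAmenable {G : Type*} [Group G]
    (h : ResiduallyAmenable G) : IsSofic G := by
  classical
  intro F ε hε _
  obtain ⟨M, _, hM, φ, hφ⟩ := h.exists_hom_forall_ne_one F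
  obtain ⟨A, hA, hAF⟩ :=
    folnerCondition_iff_card_exitSet_le.1 hM ((F ∪ F * F).image φ) (ε / 2) (half_pos hε)
  exact ⟨A, inferInstance, hA.to_subtype, fun g ↦ partialTranslate A (φ g),
    isQuasiAction_partialTranslate hε φ hφ hA fun g hg ↦ hAF _ (mem_image_of_mem φ hg)⟩
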